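/- Let Σ be a finite alphabet with |Σ| ≥ 2 and let K = (π_0, π_1, …, π_{k−1}) be a tuple of linear orders on Σ with π_0 = Id. If there exists an index i with 0 ≤ i ≤ k−3 such that π_i = Id, π_{i+1} = Rev and π_{i+2} ≠ Id, then BWT_K is not rank-invertible. -/

import Mathlib

namespace Paper

variable {α : Type*}

/-- A word is primitive if its cyclic rotations are pairwise distinct. -/
def Primitive (w : List α) : Prop :=
  ∀ i j, i < w.length → j < w.length → w.rotate i = w.rotate j → i = j

/-- Generalized lexicographic strict order on equal-length words determined by a
sequence `σ` of strict orders, one per position (`σ d` is used at position `d`). -/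
def KLt (σ : ℕ → α → α → Prop) : ℕ → List α → List α → Prop
  | _, [], _ => False
  | _, _ :: _, [] => False
  | d, a :: x, b :: y => σ d a b ∨ (a = b ∧ KLt σ (d + 1) x y)

/-- Rank-invertibility of the generalized BWT determined by the sequence of
per-position strict orders `σ`: there is a function `f` computing `LF i` from
the Parikh vector of the last column `L`, the symbol `L i`, and the number of
occurrences of `L i` in `L[0..i]`. -/
def RankInvertible [LinearOrder α] (σ : ℕ → α → α → Prop) : Prop :=
  ∃ f : (α → ℕ) → α → ℕ → ℕ,
    ∀ (n : ℕ) (w : List α), w.length = n → Primitive w →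
      ∀ (rows : Fin n → List α) (L : Fin n → α) (LF : Fin n → Fin n),
        (∀ j : Fin n, ∃ i : Fin n, rows i = w.rotate j.val) →
        (∀ i j : Fin n, i < j → KLt σ 0 (rows i) (rows j)) →
        (∀ i, (rows i).getLast? = some (L i)) →
        (∀ i, rows (LF i) = (rows i).rotate ((rows i).length - 1)) →
        ∀ i : Fin n, (LF i : ℕ) =
          f (fun c => (List.ofFn L).count c) (L i)
            (((List.ofFn L).take (i.val + 1)).count (L i))

/-!
Rank-invertibility forces `LF` to depend only on the Parikh vector, the symbol and its rank.
Writing `<ᵢ` for the order used at position `i`, choose `a <ᵢ b` with `b <ᵢ₊₂ a`, so that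
`b <ᵢ₊₁ a` as well, and compare the words `a·bⁱ·a·bⁱ⁺³` and `a·bⁱ⁺¹·a·bⁱ⁺²`, which have the same Parikh
vector. In each of them `a` occurs twice; the two rotations ending in `a` first differ at position
`i`, respectively `i + 1`, and rotating them right by one moves the difference to position `i +
1`, respectively `i + 2`. Hence `LF` exchanges the two occurrences of `a` for the first word and
preserves their order for the second.
-/

open scoped List

section KLt

variable {σ : ℕ → α → α → Prop} {d : ℕ}

theorem KLt.irrefl [∀ d, Std.Irrefl (σ d)] : ∀ (d : ℕ) (x : List α), ¬ KLt σ d x x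
  | _, [] => id
  | d, a :: x => by
    rintro (h | ⟨-, h⟩)
    · exact irrefl_of (σ d) a h
    · exact KLt.irrefl (d + 1) x h

theorem KLt.trans [∀ d, IsTrans α (σ d)] :
    ∀ {d : ℕ} {x y z : List α}, KLt σ d x y → KLt σ d y z → KLt σ d x z
  | d, _ :: _, _ :: _, _ :: _, .inl hab, .inl hbc => .inl (trans_of (σ d) hab hbc)
  | _, _ :: _, _ :: _, _ :: _, .inl hab, .inr ⟨hbc, _⟩ => .inl (hbc ▸ hab)
  | _, _ :: _, _ :: _, _ :: _, .inr ⟨hab, _⟩, .inl hbc => .inl (hab ▸ hbc)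
  | _, _ :: _, _ :: _, _ :: _, .inr ⟨hab, hxy⟩, .inr ⟨hbc, hyz⟩ =>
    .inr ⟨hab.trans hbc, hxy.trans hyz⟩

theorem KLt.asymm [∀ d, IsStrictOrder α (σ d)] {x y : List α} (hxy : KLt σ d x y) :
    ¬ KLt σ d y x :=
  fun hyx => KLt.irrefl d x (hxy.trans hyx)

theorem KLt.trichotomy [∀ d, Std.Trichotomous (σ d)] :
    ∀ (d : ℕ) {x y : List α}, x.length = y.length → KLt σ d x y ∨ x = y ∨ KLt σ d y x
  | _, [], [], _ => .inr (.inl rfl)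
  | d, a :: x, b :: y, h => by
    rcases trichotomous_of (σ d) a b with hab | rfl | hba
    · exact .inl (.inl hab)
    · rcases KLt.trichotomy (d + 1) (Nat.succ.inj h) with hxy | rfl | hyx
      · exact .inl (.inr ⟨rfl, hxy⟩)
      · exact .inr (.inl rfl)
      · exact .inr (.inr (.inr ⟨rfl, hyx⟩))
    · exact .inr (.inr (.inl hba))

theorem KLt.cons_iff [∀ d, Std.Irrefl (σ d)] {a : α} {x y : List α} :
    KLt σ d (a :: x) (a :: y) ↔ KLt σ (d + 1) x y := by
  simp only [KLt, irrefl_of (σ d) a, true_and, false_or]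

theorem KLt.append_left (z : List α) {x y : List α} (h : KLt σ (d + z.length) x y) :
    KLt σ d (z ++ x) (z ++ y) := by
  induction z generalizing d with
  | nil => exact h
  | cons c z ih => exact .inr ⟨rfl, ih (by rwa [Nat.add_assoc, Nat.add_comm 1])⟩

theorem KLt.append_right (z z' : List α) :
    ∀ {d : ℕ} {x y : List α}, KLt σ d x y → KLt σ d (x ++ z) (y ++ z')
  | _, _ :: _, _ :: _, .inl hab => .inl hab
  | _, _ :: _, _ :: _, .inr ⟨hab, hxy⟩ => .inr ⟨hab, hxy.append_right z z'⟩

end KLt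

section Rank

variable [DecidableEq α] {n : ℕ} {L : Fin n → α} {i j : Fin n}

/-- The rank `rank_{L[i]}(L, i)` of position `i` in the column `L`; ranks start at `1`. -/
def rank (L : Fin n → α) (i : Fin n) : ℕ :=
  ((List.ofFn L).take (i + 1)).count (L i)

theorem rank_eq_count_take_add_one (L : Fin n → α) (i : Fin n) :
    rank L i = ((List.ofFn L).take i).count (L i) + 1 := by
  simp [rank, List.take_add_one, List.count_append]

theorem rank_lt_rank (hij : i < j) (hL : L i = L j) : rank L i < rank L j := by
  rw [rank_eq_count_take_add_one L j, Nat.lt_succ_iff, rank, hL]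
  exact (List.take_sublist_take_left hij).count_le _

theorem rank_le_count (L : Fin n → α) (i : Fin n) : rank L i ≤ (List.ofFn L).count (L i) :=
  (List.take_sublist _ _).count_le _

theorem rank_of_count_eq_two (hij : i < j) (hL : L i = L j)
    (hcount : (List.ofFn L).count (L j) = 2) : rank L i = 1 ∧ rank L j = 2 := by
  have hi_pos := rank_eq_count_take_add_one L i
  have hij_rank := rank_lt_rank hij hL
  have hj_le := rank_le_count L j
  omega

end Rank

section BWTMatrix

variable {σ : ℕ → α → α → Prop} {w : List α}

/-- The `≼_K`-sorted matrix of the rotations of `w`, given by its rows, with last column `L` and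
with the permutation `LF` of its row indices. -/
structure IsBWTMatrix (σ : ℕ → α → α → Prop) (w : List α) (rows : Fin w.length → List α)
    (L : Fin w.length → α) (LF : Fin w.length → Fin w.length) : Prop where
  exists_row : ∀ j : Fin w.length, ∃ i, rows i = w.rotate j
  klt_of_lt : ∀ i j, i < j → KLt σ 0 (rows i) (rows j)
  getLast?_row : ∀ i, (rows i).getLast? = some (L i)
  row_LF : ∀ i, rows (LF i) = (rows i).rotate ((rows i).length - 1)

theorem exists_relIso_fin_card {ι : Type*} [Fintype ι] (r : ι → ι → Prop)
    [IsStrictTotalOrder ι r] :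
    Nonempty (((· < ·) : Fin (Fintype.card ι) → Fin (Fintype.card ι) → Prop) ≃r r) := by
  classical
  let := linearOrderOfSTO r
  exact ⟨(Fintype.orderIsoFinOfCardEq ι rfl).toRelIsoLT⟩

theorem Primitive.isStrictTotalOrder_rotate [∀ d, IsStrictTotalOrder α (σ d)] (hw : Primitive w) :
    IsStrictTotalOrder (Fin w.length) fun i j => KLt σ 0 (w.rotate i) (w.rotate j) where
  irrefl _ := KLt.irrefl 0 _
  trans _ _ _ := KLt.trans
  trichotomous i j hij hji := by
    rcases KLt.trichotomy (σ := σ) 0 (x := w.rotate i) (y := w.rotate j) (by simp) with h | h | h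
    · exact absurd h hij
    · exact Fin.ext (hw i j i.isLt j.isLt h)
    · exact absurd h hji

theorem Primitive.exists_isBWTMatrix [∀ d, IsStrictTotalOrder α (σ d)] (hw : Primitive w) :
    ∃ rows L LF, IsBWTMatrix σ w rows L LF := by
  have := hw.isStrictTotalOrder_rotate (σ := σ)
  obtain ⟨e⟩ := exists_relIso_fin_card fun i j : Fin w.length =>
    KLt σ 0 (w.rotate i) (w.rotate j)
  rw [Fintype.card_fin] at e
  have exists_last (i) : ∃ c, (w.rotate (e i)).getLast? = some c := by
    have hrow : w.rotate (e i) ≠ [] :=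
      List.ne_nil_of_length_pos (by rw [List.length_rotate]; exact i.pos)
    exact ⟨_, List.getLast?_eq_some_getLast hrow⟩
  have exists_LF (i) : ∃ j, w.rotate (e j) =
      (w.rotate (e i)).rotate ((w.rotate (e i)).length - 1) := by
    refine ⟨e.symm ⟨(e i + ((w.rotate (e i)).length - 1)) % w.length,
      Nat.mod_lt _ (Fin.pos i)⟩, ?_⟩
    rw [e.apply_symm_apply, List.rotate_mod, List.rotate_rotate]
  choose L hL using exists_last
  choose LF hLF using exists_LF
  exact ⟨fun i => w.rotate (e i), L, LF,
    { exists_row j := ⟨e.symm j, by rw [e.apply_symm_apply]⟩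
      klt_of_lt _ _ := e.map_rel_iff.2
      getLast?_row := hL
      row_LF := hLF }⟩

namespace IsBWTMatrix

variable {rows : Fin w.length → List α} {L : Fin w.length → α} {LF : Fin w.length → Fin w.length}
  {a : α} {u v : List α} {i j : Fin w.length}

theorem klt_iff_lt [∀ d, IsStrictOrder α (σ d)] (h : IsBWTMatrix σ w rows L LF) :
    KLt σ 0 (rows i) (rows j) ↔ i < j := by
  refine ⟨fun hij => lt_of_not_ge fun hji => ?_, h.klt_of_lt i j⟩
  rcases hji.lt_or_eq with hji | rfl
  · exact hij.asymm (h.klt_of_lt j i hji)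
  · exact KLt.irrefl 0 _ hij

theorem exists_row_eq_of_isRotated (h : IsBWTMatrix σ w rows L LF) (hw : w ≠ []) (hu : w ~r u) :
    ∃ i, rows i = u := by
  obtain ⟨m, rfl⟩ := hu
  obtain ⟨i, hi⟩ := h.exists_row ⟨m % w.length, Nat.mod_lt m (List.length_pos_iff.2 hw)⟩
  exact ⟨i, hi.trans (w.rotate_mod m)⟩

theorem last_eq (h : IsBWTMatrix σ w rows L LF) (hi : rows i = u ++ [a]) : L i = a := by
  simpa [hi] using (h.getLast?_row i).symm

theorem row_LF_eq (h : IsBWTMatrix σ w rows L LF) (hi : rows i = u ++ [a]) :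
    rows (LF i) = a :: u := by
  simp [h.row_LF, hi, List.rotate_append_length_eq]

theorem ofFn_last_perm (h : IsBWTMatrix σ w rows L LF) (hw : Primitive w) : List.ofFn L ~ w := by
  choose g hg using h.exists_row
  have hg_inj : Function.Injective g := fun i j hij =>
    Fin.ext (hw i j i.isLt j.isLt (by rw [← hg, ← hg, hij]))
  have ofFn_last : List.ofFn (L ∘ g) = w.rotate (w.length - 1) := by
    refine List.ext_getElem (by simp) fun m hm _ => ?_
    have hm : m < w.length := by simpa using hm
    have hlast := h.getLast?_row (g ⟨m, hm⟩)
    rw [hg, List.getLast?_eq_getElem?, List.length_rotate,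
      List.getElem?_rotate (by omega), Nat.add_comm, List.getElem?_eq_some_iff] at hlast
    obtain ⟨_, hlast⟩ := hlast
    simp [List.getElem_rotate, ← hlast]
  have hg_bij := Finite.injective_iff_bijective.1 hg_inj
  calc List.ofFn L ~ List.ofFn (L ∘ g) :=
        (Equiv.Perm.ofFn_comp_perm (Equiv.ofBijective g hg_bij) L).symm
    _ = w.rotate (w.length - 1) := ofFn_last
    _ ~ w := w.rotate_perm _

theorem exists_rank_one_rank_two [DecidableEq α] [∀ d, IsStrictOrder α (σ d)]
    (h : IsBWTMatrix σ w rows L LF)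
    (hw : Primitive w) (hcount : w.count a = 2) (hu : w ~r u ++ [a]) (hv : w ~r v ++ [a])
    (huv : KLt σ 0 (u ++ [a]) (v ++ [a])) :
    ∃ i j, L i = a ∧ L j = a ∧ rank L i = 1 ∧ rank L j = 2 ∧ (LF i < LF j ↔ KLt σ 1 u v) := by
  have hw_ne : w ≠ [] := by rintro rfl; simp at hcount
  obtain ⟨i, hi⟩ := h.exists_row_eq_of_isRotated hw_ne hu
  obtain ⟨j, hj⟩ := h.exists_row_eq_of_isRotated hw_ne hv
  have hLi := h.last_eq hi
  have hLj := h.last_eq hj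
  have hij : i < j := h.klt_iff_lt.1 (by rwa [hi, hj])
  obtain ⟨hri, hrj⟩ := rank_of_count_eq_two hij (hLi.trans hLj.symm)
    (by rw [hLj, (h.ofFn_last_perm hw).count_eq, hcount])
  refine ⟨i, j, hLi, hLj, hri, hrj, ?_⟩
  rw [← h.klt_iff_lt, h.row_LF_eq hi, h.row_LF_eq hj, KLt.cons_iff]

end IsBWTMatrix

end BWTMatrix

section RankInvertible

variable [LinearOrder α] {σ : ℕ → α → α → Prop} {w w' : List α}

theorem RankInvertible.LF_eq_LF (hσ : RankInvertible σ) (hw : Primitive w) (hw' : Primitive w')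
    (hperm : w ~ w') {rows L LF rows' L' LF'} (h : IsBWTMatrix σ w rows L LF)
    (h' : IsBWTMatrix σ w' rows' L' LF') {i : Fin w.length} {j : Fin w'.length}
    (hL : L i = L' j) (hrank : rank L i = rank L' j) : (LF i : ℕ) = LF' j := by
  obtain ⟨f, hf⟩ := hσ
  have hparikh : (fun c => (List.ofFn L).count c) = fun c => (List.ofFn L').count c :=
    funext ((h.ofFn_last_perm hw).trans (hperm.trans (h'.ofFn_last_perm hw').symm)).count_eq
  calc (LF i : ℕ) = f (fun c => (List.ofFn L).count c) (L i) (rank L i) :=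
        hf _ w rfl hw rows L LF h.exists_row h.klt_of_lt h.getLast?_row h.row_LF i
    _ = f (fun c => (List.ofFn L').count c) (L' j) (rank L' j) := by rw [hparikh, hL, hrank]
    _ = LF' j :=
        (hf _ w' rfl hw' rows' L' LF' h'.exists_row h'.klt_of_lt h'.getLast?_row h'.row_LF j).symm

theorem RankInvertible.klt_iff_klt [∀ d, IsStrictTotalOrder α (σ d)] (hσ : RankInvertible σ)
    (hw : Primitive w) (hw' : Primitive w') (hperm : w ~ w') {a : α} (hcount : w.count a = 2)
    {u v u' v' : List α} (hu : w ~r u ++ [a]) (hv : w ~r v ++ [a])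
    (hu' : w' ~r u' ++ [a]) (hv' : w' ~r v' ++ [a])
    (huv : KLt σ 0 (u ++ [a]) (v ++ [a])) (huv' : KLt σ 0 (u' ++ [a]) (v' ++ [a])) :
    KLt σ 1 u v ↔ KLt σ 1 u' v' := by
  obtain ⟨rows, L, LF, h⟩ := hw.exists_isBWTMatrix (σ := σ)
  obtain ⟨rows', L', LF', h'⟩ := hw'.exists_isBWTMatrix (σ := σ)
  obtain ⟨i, j, hi, hj, hri, hrj, hLF⟩ := h.exists_rank_one_rank_two hw hcount hu hv huv
  obtain ⟨i', j', hi', hj', hri', hrj', hLF'⟩ :=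
    h'.exists_rank_one_rank_two hw' (hperm.count_eq a ▸ hcount) hu' hv' huv'
  have hLFi := hσ.LF_eq_LF hw hw' hperm h h' (hi.trans hi'.symm) (hri.trans hri'.symm)
  have hLFj := hσ.LF_eq_LF hw hw' hperm h h' (hj.trans hj'.symm) (hrj.trans hrj'.symm)
  rw [← hLF, ← hLF', Fin.lt_def, Fin.lt_def, hLFi, hLFj]

end RankInvertible

theorem primitive_of_rotate_ne_self {w : List α}
    (h : ∀ d, 0 < d → d < w.length → w.rotate d ≠ w) : Primitive w := by
  intro i j hi hj hij
  wlog hlt : i < j generalizing i j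
  · exact (eq_or_lt_of_not_gt hlt).elim Eq.symm fun hji => (this j i hj hi hij.symm hji).symm
  have hrot : (w.rotate (j - i)).rotate i = w.rotate i := by
    rw [List.rotate_rotate, Nat.sub_add_cancel hlt.le, hij]
  exact absurd (List.rotate_injective i hrot) (h (j - i) (by omega) (by omega))

section SplitRun

variable {a b : α} {p q d : ℕ}

/-- The word `b^p a b^q`. The witnesses `a b^p a b^q` are cyclically `b^p a b^q a` and
`b^q a b^p a`, so this is what precedes a final `a` in their rotations. -/
def splitRun (a b : α) (p q : ℕ) : List α :=
  List.replicate p b ++ a :: List.replicate q b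

theorem cons_splitRun_rotate (a b : α) (p q : ℕ) :
    (a :: splitRun a b p q).rotate (p + 1) = a :: splitRun a b q p := by
  simpa [splitRun] using
    (a :: List.replicate p b).rotate_append_length_eq (a :: List.replicate q b)

theorem cons_splitRun_isRotated (a b : α) (p q : ℕ) :
    a :: splitRun a b p q ~r splitRun a b p q ++ [a] :=
  ⟨1, by simp⟩

theorem cons_splitRun_isRotated_swap (a b : α) (p q : ℕ) :
    a :: splitRun a b p q ~r splitRun a b q p ++ [a] :=
  .trans ⟨p + 1, cons_splitRun_rotate a b p q⟩ (cons_splitRun_isRotated a b q p)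

theorem splitRun_perm (a b : α) (p q : ℕ) : splitRun a b p q ~ a :: List.replicate (p + q) b := by
  rw [List.replicate_add]
  exact List.perm_middle

theorem getElem?_cons_splitRun_eq_some_iff (hab : a ≠ b) {m : ℕ} :
    (a :: splitRun a b p q)[m]? = some a ↔ m = 0 ∨ m = p + 1 := by
  rcases m with _ | m
  · simp
  · grind [splitRun]

theorem primitive_cons_splitRun (hab : a ≠ b) (hpq : p ≠ q) :
    Primitive (a :: splitRun a b p q) := by
  refine primitive_of_rotate_ne_self fun d hd hd_lt hrot => hpq ?_
  have hd_get : (a :: splitRun a b p q)[d]? = some a := by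
    rw [← List.head?_rotate hd_lt, hrot, List.head?_cons]
  obtain rfl : d = p + 1 :=
    ((getElem?_cons_splitRun_eq_some_iff hab).1 hd_get).resolve_left hd.ne'
  have hp_get : (a :: splitRun a b q p)[p + 1]? = some a := by
    rwa [← cons_splitRun_rotate, hrot]
  simpa using (getElem?_cons_splitRun_eq_some_iff hab).1 hp_get

variable {σ : ℕ → α → α → Prop}

theorem splitRun_eq_replicate_append (hpq : p < q) :
    ∃ x, splitRun a b q p = List.replicate p b ++ b :: x := by
  obtain ⟨s, rfl⟩ := Nat.exists_eq_add_of_lt hpq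
  exact ⟨List.replicate s b ++ a :: List.replicate p b, by
    simp [splitRun, Nat.add_assoc, List.replicate_add, List.replicate_succ]⟩

theorem klt_splitRun_swap_of_lt (hpq : p < q) (h : σ (d + p) a b) :
    KLt σ d (splitRun a b p q) (splitRun a b q p) := by
  obtain ⟨x, hx⟩ := splitRun_eq_replicate_append (a := a) (b := b) hpq
  rw [hx]
  exact .append_left _ (.inl (by rwa [List.length_replicate]))

theorem klt_splitRun_swap_of_gt (hqp : q < p) (h : σ (d + q) b a) :
    KLt σ d (splitRun a b p q) (splitRun a b q p) := by
  obtain ⟨x, hx⟩ := splitRun_eq_replicate_append (a := a) (b := b) hqp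
  rw [hx]
  exact .append_left _ (.inl (by rwa [List.length_replicate]))

end SplitRun

theorem exists_rel_and_rel_swap_of_ne {r s : α → α → Prop} [Std.Irrefl r] [Std.Trichotomous r]
    [Std.Irrefl s] [Std.Trichotomous s] (h : s ≠ r) : ∃ a b, r a b ∧ s b a := by
  contrapose! h
  ext a b
  constructor <;> intro hab
  · rcases trichotomous_of r a b with hr | rfl | hr
    · exact hr
    · exact absurd hab (irrefl_of s a)
    · exact absurd hab (h b a hr)
  · rcases trichotomous_of s a b with hs | rfl | hs
    · exact hs
    · exact absurd hab (irrefl_of r a)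
    · exact absurd hs (h a b hab)

theorem bwtK_triplet_id_rev_not_rank_invertible_general [LinearOrder α] {σ : ℕ → α → α → Prop}
    [∀ d, IsStrictTotalOrder α (σ d)] {i : ℕ} (hrev : σ (i + 1) = Function.swap (σ i))
    (hne : σ (i + 2) ≠ σ i) : ¬ RankInvertible σ := by
  intro hσ
  obtain ⟨a, b, hi, hi2⟩ := exists_rel_and_rel_swap_of_ne hne
  have hi1 : σ (i + 1) b a := by rwa [hrev]
  have hab : a ≠ b := by rintro rfl; exact irrefl_of (σ i) a hi
  have hperm : a :: splitRun a b i (i + 3) ~ a :: splitRun a b (i + 1) (i + 2) := by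
    refine .cons a ((splitRun_perm ..).trans (.trans ?_ (splitRun_perm ..).symm))
    rw [show i + (i + 3) = i + 1 + (i + 2) by omega]
  have hcount : (a :: splitRun a b i (i + 3)).count a = 2 := by
    simp [(splitRun_perm ..).count_eq, List.count_replicate, hab.symm]
  have hLF : KLt σ 1 (splitRun a b i (i + 3)) (splitRun a b (i + 3) i) ↔
      KLt σ 1 (splitRun a b (i + 2) (i + 1)) (splitRun a b (i + 1) (i + 2)) :=
    hσ.klt_iff_klt (primitive_cons_splitRun hab (by omega)) (primitive_cons_splitRun hab (by omega))
      hperm hcount (cons_splitRun_isRotated ..) (cons_splitRun_isRotated_swap ..)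
      (cons_splitRun_isRotated_swap ..) (cons_splitRun_isRotated ..)
      (.append_right _ _ (klt_splitRun_swap_of_lt (by omega) (by rwa [Nat.zero_add])))
      (.append_right _ _ (klt_splitRun_swap_of_gt (by omega) (by rwa [Nat.zero_add])))
  have hswap : KLt σ 1 (splitRun a b (i + 3) i) (splitRun a b i (i + 3)) :=
    klt_splitRun_swap_of_gt (by omega) (by rwa [Nat.add_comm])
  have hkeep : KLt σ 1 (splitRun a b (i + 2) (i + 1)) (splitRun a b (i + 1) (i + 2)) :=
    klt_splitRun_swap_of_gt (by omega) (by rwa [Nat.add_comm])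
  exact hswap.asymm (hLF.2 hkeep)

/-- for a finite alphabet with at least two symbols and a tuple
`K = (π 0, …, π (k-1))` with `π 0 = Id`, if `K` contains a triplet
`(Id, Rev, π)` with `π ≠ Id` (i.e. `π i = Id`, `π (i+1) = Rev`,
`π (i+2) ≠ Id` for some `i ≤ k−3`), then `BWT_K` is not rank-invertible. -/
theorem bwtK_triplet_id_rev_not_rank_invertible [LinearOrder α] [Fintype α]
    (hcard : 2 ≤ Fintype.card α)
    (k : ℕ) (hk : 0 < k) (π : Fin k → α → α → Prop)
    (horder : ∀ t, IsStrictTotalOrder α (π t))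
    (h0 : π ⟨0, hk⟩ = fun a b : α => a < b)
    (i : ℕ) (hik : i + 2 < k)
    (hi : π ⟨i, by omega⟩ = fun a b : α => a < b)
    (hi1 : π ⟨i + 1, by omega⟩ = fun a b : α => b < a)
    (hi2 : π ⟨i + 2, hik⟩ ≠ fun a b : α => a < b) :
    ¬ RankInvertible (fun d => π ⟨d % k, Nat.mod_lt d hk⟩) := by
  have hi_lt : i < k := by omega
  have hi1_lt : i + 1 < k := by omega
  exact bwtK_triplet_id_rev_not_rank_invertible_general (i := i)
    (by simp only [Nat.mod_eq_of_lt hi_lt, Nat.mod_eq_of_lt hi1_lt, hi, hi1])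
    (by simpa only [Nat.mod_eq_of_lt hi_lt, Nat.mod_eq_of_lt hik, hi] using hi2)

end Paper
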